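/- arXiv:0707.0568 — 2 statements merged into one kernel-verified Lean document; each statement's English description precedes it below -/
import Mathlib

section
/- Suppose Q ≥ 2 and Γ_q·|H_rq(k)|²/|H_qq(k)|² < 1/(Q−1) for every q, every r ≠ q, and every k ∈ {1,…,N}. Then Σ_{r≠q}[H(k)]_qr < 1 for every q and every k (condition C3 with unit weights); consequently ρ(H(k)) < 1 for every k and game G admits exactly one Nash equilibrium. The same conclusions hold under the stronger hypothesis Γ_q·|H_rq(k)|²/|H_qq(k)|² < 1/(2Q−3) for all q, r ≠ q, k. (Corollary 3: conditions C5 and C6 are sufficient for C3.) -/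
/-!
With the other users' powers fixed, user `q` maximizes `Σ_k log (1 + p k / c k)` where
`c k = Γ_q (1 + Σ_{r≠q} |H_rq(k)|² p_r(k)) / |H_qq(k)|²`. An optimal `p` has maximal total power,
and among such allocations optimality says that no transfer of power between carriers points along
the gradient `1 / (c k + p k)`. Such a condition only depends on how the carriers are ordered by the
gradient, so `1 / (c k + p k)` may be replaced by `-(c k + p k)`. This is the gradient of
`-‖p + c‖² / 2`: the best response is the Euclidean projection of `-c` onto the set of allocations
of maximal total power.

Projections are nonexpansive in the `ℓ²` norm over carriers, and `c` depends on the profile with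
Lipschitz constant `max_q Σ_{r≠q} max_k Γ_q |H_rq(k)|² / |H_qq(k)|² < 1` for the maximum over users
of the `ℓ²` norms. Banach's theorem therefore gives exactly one equilibrium, and Gershgorin's
theorem bounds the spectral radii.
-/

open scoped ENNReal

namespace NCGame

/-- The data of game `G`: `Q` users, `N` carriers, channel gains `chan r q k` (from source `r`
to destination `q` on carrier `k`), gap parameters `gap q ≥ 1`, and spectral-mask limits
`pmax q k ∈ (0, ∞]`. -/
structure GameData (Q N : ℕ) where
  chan : Fin Q → Fin Q → Fin N → ℂ
  gap : Fin Q → ℝ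
  pmax : Fin Q → Fin N → ℝ≥0∞
  chan_diag_ne : ∀ q k, chan q q k ≠ 0
  one_le_gap : ∀ q, 1 ≤ gap q
  pmax_pos : ∀ q k, 0 < pmax q k

namespace GameData

variable {Q N : ℕ}

/-- The strategy set `P_q` of user `q`: powers within the spectral mask whose average
does not exceed the power budget. -/
def stratSet (G : GameData Q N) (q : Fin Q) : Set (Fin N → ℝ) :=
  { p | (∀ k, 0 ≤ p k ∧ ENNReal.ofReal (p k) ≤ G.pmax q k) ∧
        (1 / (N : ℝ)) * ∑ k, p k ≤ 1 }

/-- Interference-plus-noise `1 + Σ_{r ≠ q} |H_rq(k)|² p_r(k)` seen by user `q` on carrier `k`. -/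
noncomputable def interf (G : GameData Q N) (q : Fin Q) (p : Fin Q → Fin N → ℝ)
    (k : Fin N) : ℝ :=
  1 + ∑ r ∈ Finset.univ.erase q, ‖G.chan r q k‖ ^ 2 * p r k

/-- The payoff `R_q(p)` of user `q` at the strategy profile `p`. -/
noncomputable def payoff (G : GameData Q N) (q : Fin Q) (p : Fin Q → Fin N → ℝ) : ℝ :=
  (1 / (N : ℝ)) * ∑ k, Real.log (1 +
    (1 / G.gap q) * (‖G.chan q q k‖ ^ 2 * p q k) / G.interf q p k)

/-- `p` is a Nash equilibrium of game `G`. -/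
def isNE (G : GameData Q N) (p : Fin Q → Fin N → ℝ) : Prop :=
  (∀ q, p q ∈ G.stratSet q) ∧
  ∀ q, ∀ pq ∈ G.stratSet q, G.payoff q (Function.update p q pq) ≤ G.payoff q p

end GameData

end NCGame

namespace NCGame

/-- Euclidean projection of `x` onto the interval `[0, b]`, where `b ∈ (0, ∞]`. -/
noncomputable def proj (x : ℝ) (b : ℝ≥0∞) : ℝ :=
  if b = ⊤ then max 0 x else min b.toReal (max 0 x)

namespace GameData

variable {Q N : ℕ}

/-- `p` is an admissible strategy profile of the users other than `q` (the `q`-th component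
is irrelevant). -/
def otherStrats (G : GameData Q N) (q : Fin Q) (p : Fin Q → Fin N → ℝ) : Prop :=
  ∀ r, r ≠ q → p r ∈ G.stratSet r

/-- `wf` is the waterfilling response `WF_q(p_{-q})` of user `q` to the strategies `p` of the
other users: there is a water level `μ` such that each component is the projection of
`μ − Γ_q (1 + Σ_{r≠q}|H_rq(k)|² p_r(k))/|H_qq(k)|²` onto `[0, p_q^max(k)]`, and the average
power equals `1`. -/
def isWFResp (G : GameData Q N) (q : Fin Q) (p : Fin Q → Fin N → ℝ)
    (wf : Fin N → ℝ) : Prop :=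
  (∃ μ : ℝ, ∀ k, wf k =
      proj (μ - G.gap q * G.interf q p k / ‖G.chan q q k‖ ^ 2) (G.pmax q k)) ∧
  (1 / (N : ℝ)) * ∑ k, wf k = 1

/-- The set `D_q` of carriers that user `q` can possibly use in a waterfilling best response
to some admissible strategy of the other users. -/
def Dset (G : GameData Q N) (q : Fin Q) : Set (Fin N) :=
  { k | ∃ p wf, G.otherStrats q p ∧ G.isWFResp q p wf ∧ wf k ≠ 0 }

open Classical in
/-- The matrix `H(k)` of normalized cross-channel gains. -/
noncomputable def Hmat (G : GameData Q N) (k : Fin N) : Matrix (Fin Q) (Fin Q) ℝ :=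
  fun q r =>
    if r ≠ q ∧ k ∈ G.Dset q ∧ k ∈ G.Dset r then
      G.gap q * ‖G.chan r q k‖ ^ 2 / ‖G.chan q q k‖ ^ 2
    else 0

end GameData

/-- Spectral radius of a real square matrix: the largest modulus of its (complex) spectrum. -/
noncomputable def specRad {Q : ℕ} (M : Matrix (Fin Q) (Fin Q) ℝ) : ℝ :=
  sSup ((fun z => ‖z‖) '' spectrum ℂ (M.map (Complex.ofReal ·)))

end NCGame

namespace NCGame

open scoped NNReal

/-! ### Euclidean geometry -/

section EuclideanGeometry

variable {E : Type*} [NormedAddCommGroup E] [InnerProductSpace ℝ E] {K : Set E} {u u' v v' : E}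

/-- `v` is the metric projection of `u` onto the convex set `K`, encoded by its variational
inequality; for convex `K` this is the same as `v` minimizing the distance to `u` over `K`. -/
def IsProj (K : Set E) (u v : E) : Prop :=
  v ∈ K ∧ ∀ w ∈ K, inner ℝ (u - v) (w - v) ≤ 0

theorem exists_isProj [CompleteSpace E] (hne : K.Nonempty) (hclosed : IsClosed K)
    (hconv : Convex ℝ K) (u : E) : ∃ v, IsProj K u v := by
  obtain ⟨v, hv, hmin⟩ := exists_norm_eq_iInf_of_complete_convex hne hclosed.isComplete hconv u
  exact ⟨v, hv, (norm_eq_iInf_iff_real_inner_le_zero hconv hv).1 hmin⟩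

theorem IsProj.dist_le_dist (h : IsProj K u v) (h' : IsProj K u' v') :
    dist v v' ≤ dist u u' := by
  have hsum : inner ℝ (u - v) (v' - v) + inner ℝ (u' - v') (v - v')
      = inner ℝ (v - v') (v - v') - inner ℝ (u - u') (v - v') := by
    simp only [inner_sub_left, inner_sub_right]
    ring
  have hsq : ‖v - v'‖ * ‖v - v'‖ ≤ ‖u - u'‖ * ‖v - v'‖ :=
    calc ‖v - v'‖ * ‖v - v'‖
        = inner ℝ (v - v') (v - v') := (real_inner_self_eq_norm_mul_norm _).symm
      _ ≤ inner ℝ (u - u') (v - v') := by linarith [h.2 v' h'.1, h'.2 v h.1]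
      _ ≤ ‖u - u'‖ * ‖v - v'‖ := real_inner_le_norm _ _
  rw [dist_eq_norm, dist_eq_norm]
  obtain hzero | hpos := (norm_nonneg (v - v')).eq_or_lt
  · exact hzero ▸ norm_nonneg _
  · exact le_of_mul_le_mul_right hsq hpos

theorem IsProj.eq (h : IsProj K u v) (h' : IsProj K u v') : v = v' :=
  dist_le_zero.1 <| (h.dist_le_dist h').trans_eq (dist_self u)

theorem existsUnique_forall_isProj {ι : Type*} [Fintype ι] {E : ι → Type*}
    [∀ q, NormedAddCommGroup (E q)] [∀ q, InnerProductSpace ℝ (E q)] [∀ q, CompleteSpace (E q)]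
    {K : ∀ q, Set (E q)} (hne : ∀ q, (K q).Nonempty) (hclosed : ∀ q, IsClosed (K q))
    (hconv : ∀ q, Convex ℝ (K q)) {F : (∀ q, E q) → ∀ q, E q} {L : ℝ≥0} (hL : L < 1)
    (hF : LipschitzWith L F) : ∃! x, ∀ q, IsProj (K q) (F x q) (x q) := by
  choose P hP using fun q => exists_isProj (hne q) (hclosed q) (hconv q)
  have hcontr : ContractingWith L fun x q => P q (F x q) :=
    ⟨hL, LipschitzWith.of_dist_le_mul fun x y => (dist_pi_le_iff (by positivity)).2 fun q =>
      ((hP q _).dist_le_dist (hP q _)).trans <|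
        (dist_le_pi_dist (F x) (F y) q).trans (hF.dist_le_mul x y)⟩
  refine ⟨hcontr.fixedPoint, fun q => ?_, fun x hx => hcontr.fixedPoint_unique ?_⟩
  · have hfix := congrFun hcontr.fixedPoint_isFixedPt q
    exact hfix ▸ hP q _
  · exact funext fun q => (hP q _).eq (hx q)

theorem norm_toLp_mul_le {ι : Type*} [Fintype ι] {a : ι → ℝ} {A : ℝ} (hA : 0 ≤ A)
    (ha : ∀ k, |a k| ≤ A) (v : EuclideanSpace ℝ ι) :
    ‖WithLp.toLp 2 (a * v.ofLp)‖ ≤ A * ‖v‖ := by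
  rw [← Real.norm_of_nonneg hA, ← norm_smul, EuclideanSpace.norm_eq, EuclideanSpace.norm_eq]
  refine Real.sqrt_le_sqrt (Finset.sum_le_sum fun k _ => ?_)
  simp only [Pi.mul_apply, PiLp.smul_apply, smul_eq_mul, norm_mul, Real.norm_eq_abs,
    abs_of_nonneg hA]
  gcongr
  exact ha k

end EuclideanGeometry

/-! ### Power allocation of a single user -/

section PowerAllocation

variable {ι : Type*} {b c f p : ι → ℝ} {B : ℝ}

/-- The exchange condition at the allocation `p` with caps `b` and levels `f`: transferring power
from a used coordinate `j` to an unsaturated coordinate `i` never leads to a lower level. -/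
def ExchangeStable (b p f : ι → ℝ) : Prop :=
  ∀ i j, p i < b i → 0 < p j → f j ≤ f i

theorem exchangeStable_neg_inv_iff (hf : ∀ k, 0 < f k) :
    ExchangeStable b p (-f⁻¹) ↔ ExchangeStable b p f := by
  simp only [ExchangeStable, Pi.neg_apply, Pi.inv_apply, neg_le_neg_iff,
    inv_le_inv₀ (hf _) (hf _)]

theorem ExchangeStable.exists_level [Finite ι] (h : ExchangeStable b p f) :
    ∃ μ, ∀ k, (p k < b k → μ ≤ f k) ∧ (0 < p k → f k ≤ μ) := by
  obtain hunused | hused := {k | 0 < p k}.eq_empty_or_nonempty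
  · obtain ⟨μ, hμ⟩ := (Set.finite_range f).bddBelow
    exact ⟨μ, fun k => ⟨fun _ => hμ ⟨k, rfl⟩, fun hk => (hunused.subset hk).elim⟩⟩
  · obtain ⟨m, hm, hmax⟩ := Set.exists_max_image _ f (Set.toFinite _) hused
    exact ⟨f m, fun k => ⟨fun hk => h k m hk hm, hmax k⟩⟩

variable [Fintype ι]

/-- Allocations with caps `b` and total power at most `B`. -/
def budgetSet (b : ι → ℝ) (B : ℝ) : Set (ι → ℝ) :=
  {p | p ∈ Set.Icc 0 b ∧ ∑ k, p k ≤ B}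

/-- The maximal elements of `budgetSet b B`: allocations that spend the whole budget, or saturate
all caps when the budget exceeds their sum. -/
def fullPowerSet (b : ι → ℝ) (B : ℝ) : Set (ι → ℝ) :=
  {p | p ∈ Set.Icc 0 b ∧ ∑ k, p k = min B (∑ k, b k)}

/-- The sum rate of the allocation `p` over parallel channels with noise levels `c`. -/
noncomputable def sumRate (c p : ι → ℝ) : ℝ :=
  ∑ k, Real.log (1 + p k / c k)

theorem fullPowerSet_subset_budgetSet : fullPowerSet b B ⊆ budgetSet b B :=
  fun _ hp => ⟨hp.1, hp.2.trans_le (min_le_left _ _)⟩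

theorem isClosed_fullPowerSet : IsClosed (fullPowerSet b B) :=
  isClosed_Icc.inter (isClosed_eq (by fun_prop) continuous_const)

theorem convex_fullPowerSet : Convex ℝ (fullPowerSet b B) :=
  (convex_Icc 0 b).inter <| convex_hyperplane (𝕜 := ℝ)
    ⟨fun _ _ => Finset.sum_add_distrib, fun _ _ => Finset.mul_sum _ _ _ |>.symm⟩ _

theorem exists_mem_fullPowerSet_ge (hp : p ∈ budgetSet b B) : ∃ w ∈ fullPowerSet b B, p ≤ w := by
  obtain ⟨⟨hp0, hpb⟩, hpB⟩ := hp
  have hmin : ∑ k, p k ≤ min B (∑ k, b k) := le_min hpB (Finset.sum_le_sum fun k _ => hpb k)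
  -- Move from `p` towards `b`; the total power takes every value in between.
  obtain ⟨w, ⟨hpw, hwb⟩, hw⟩ : min B (∑ k, b k) ∈ (fun w : ι → ℝ => ∑ k, w k) '' Set.Icc p b :=
    (convex_Icc p b).isPreconnected.intermediate_value (Set.left_mem_Icc.2 hpb)
      (Set.right_mem_Icc.2 hpb) (by fun_prop) ⟨hmin, min_le_right _ _⟩
  exact ⟨w, ⟨⟨hp0.trans hpw, hwb⟩, hw⟩, hpw⟩

theorem fullPowerSet_nonempty (hb : 0 ≤ b) (hB : 0 ≤ B) : (fullPowerSet b B).Nonempty := by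
  have hzero : (0 : ι → ℝ) ∈ budgetSet b B := ⟨⟨le_rfl, hb⟩, by simpa using hB⟩
  obtain ⟨w, hw, -⟩ := exists_mem_fullPowerSet_ge hzero
  exact ⟨w, hw⟩

theorem transfer_mem_fullPowerSet [DecidableEq ι] (hp : p ∈ fullPowerSet b B) {i j : ι} {t : ℝ}
    (ht : 0 ≤ t) (hi : p i + t ≤ b i) (hj : t ≤ p j) :
    p + (Pi.single i t - Pi.single j t) ∈ fullPowerSet b B := by
  obtain ⟨⟨hp0, hpb⟩, hpB⟩ := hp
  refine ⟨⟨fun k => ?_, fun k => ?_⟩, ?_⟩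
  · have := hp0 k
    simp only [Pi.add_apply, Pi.sub_apply, Pi.single_apply, Pi.zero_apply] at this ⊢
    split_ifs <;> grind
  · have := hpb k
    simp only [Pi.add_apply, Pi.sub_apply, Pi.single_apply]
    split_ifs <;> grind
  · simp [Finset.sum_add_distrib, hpB]

theorem exchangeStable_iff_dotProduct_nonneg (hp : p ∈ fullPowerSet b B) :
    ExchangeStable b p f ↔ ∀ w ∈ fullPowerSet b B, 0 ≤ f ⬝ᵥ (w - p) := by
  classical
  constructor
  · intro h w hw
    obtain ⟨μ, hμ⟩ := h.exists_level
    have hsum : ∑ k, (w k - p k) = 0 := by rw [Finset.sum_sub_distrib, hw.2, hp.2, sub_self]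
    calc (0 : ℝ) = ∑ k, μ * (w k - p k) := by rw [← Finset.mul_sum, hsum, mul_zero]
      _ ≤ f ⬝ᵥ (w - p) := Finset.sum_le_sum fun k _ => ?_
    have hw0 : 0 ≤ w k := hw.1.1 k
    have hwb : w k ≤ b k := hw.1.2 k
    obtain hlt | heq | hgt := lt_trichotomy (w k) (p k)
    · exact mul_le_mul_of_nonpos_right ((hμ k).2 (hw0.trans_lt hlt)) (sub_nonpos.2 hlt.le)
    · simp [heq]
    · exact mul_le_mul_of_nonneg_right ((hμ k).1 (hgt.trans_le hwb)) (sub_nonneg.2 hgt.le)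
  · intro h i j hi hj
    have ht : 0 < min (b i - p i) (p j) := lt_min (sub_pos.2 hi) hj
    have hvi := h _ <| transfer_mem_fullPowerSet hp ht.le
      (le_sub_iff_add_le'.1 (min_le_left _ _)) (min_le_right _ _)
    rw [add_sub_cancel_left, dotProduct_sub, dotProduct_single, dotProduct_single,
      sub_nonneg] at hvi
    exact le_of_mul_le_mul_right hvi ht

theorem strictMonoOn_sumRate (hc : ∀ k, 0 < c k) : StrictMonoOn (sumRate c) (Set.Ici 0) := by
  intro p hp w _ hpw
  have hpos (k : ι) : 0 < 1 + p k / c k := add_pos_of_pos_of_nonneg one_pos <|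
    div_nonneg (hp k) (hc k).le
  obtain ⟨hle, k, hlt⟩ := Pi.lt_def.1 hpw
  refine Finset.sum_lt_sum (fun k _ => Real.log_le_log (hpos k) ?_)
    ⟨k, Finset.mem_univ k, Real.log_lt_log (hpos k) ?_⟩
  · gcongr
    exacts [(hc k).le, hle k]
  · gcongr
    exact hc k

theorem isMaxOn_sumRate_budgetSet_iff (hc : ∀ k, 0 < c k) :
    p ∈ budgetSet b B ∧ IsMaxOn (sumRate c) (budgetSet b B) p ↔
      p ∈ fullPowerSet b B ∧ IsMaxOn (sumRate c) (fullPowerSet b B) p := by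
  have hmono := strictMonoOn_sumRate hc
  constructor
  · rintro ⟨hp, hmax⟩
    obtain ⟨w, hw, hpw⟩ := exists_mem_fullPowerSet_ge hp
    obtain rfl : p = w := by
      by_contra hne
      exact (hmono hp.1.1 hw.1.1 (hpw.lt_of_ne hne)).not_ge
        (hmax (fullPowerSet_subset_budgetSet hw))
    exact ⟨hw, hmax.on_subset fullPowerSet_subset_budgetSet⟩
  · rintro ⟨hp, hmax⟩
    refine ⟨fullPowerSet_subset_budgetSet hp, fun v hv => ?_⟩
    obtain ⟨w, hw, hvw⟩ := exists_mem_fullPowerSet_ge hv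
    exact (hmono.monotoneOn hv.1.1 hw.1.1 hvw).trans (hmax hw)

theorem sumRate_sub_le {w : ι → ℝ} (hc : ∀ k, 0 < c k) (hp : 0 ≤ p) (hw : 0 ≤ w) :
    sumRate c w - sumRate c p ≤ (c + p)⁻¹ ⬝ᵥ (w - p) := by
  rw [sumRate, sumRate, ← Finset.sum_sub_distrib]
  refine Finset.sum_le_sum fun k _ => ?_
  have hck := hc k
  have hpk : 0 ≤ p k := hp k
  have hwk : 0 ≤ w k := hw k
  calc Real.log (1 + w k / c k) - Real.log (1 + p k / c k)
      = Real.log ((1 + w k / c k) / (1 + p k / c k)) :=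
        (Real.log_div (by positivity) (by positivity)).symm
    _ ≤ (1 + w k / c k) / (1 + p k / c k) - 1 := Real.log_le_sub_one_of_pos (by positivity)
    _ = (c + p)⁻¹ k * (w - p) k := by
      simp only [Pi.inv_apply, Pi.add_apply, Pi.sub_apply]
      field_simp
      ring

theorem hasFDerivAt_sumRate (hc : ∀ k, 0 < c k) (hp : 0 ≤ p) :
    HasFDerivAt (sumRate c)
      (∑ k, (c k + p k)⁻¹ • (ContinuousLinearMap.proj k : (ι → ℝ) →L[ℝ] ℝ)) p := by
  refine HasFDerivAt.fun_sum fun k _ => ?_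
  have hck := hc k
  have hpk : 0 ≤ p k := hp k
  refine ((((hasFDerivAt_apply k p).mul_const (c k)⁻¹).const_add 1).log
    (by positivity)).congr_fderiv ?_
  rw [smul_smul]
  congr 1
  field_simp

theorem isMaxOn_sumRate_iff {K : Set (ι → ℝ)} (hc : ∀ k, 0 < c k) (hconv : Convex ℝ K)
    (hK : K ⊆ Set.Ici 0) (hp : p ∈ K) :
    IsMaxOn (sumRate c) K p ↔ ∀ w ∈ K, (c + p)⁻¹ ⬝ᵥ (w - p) ≤ 0 := by
  constructor
  · intro hmax w hw
    have hderiv := hmax.localize.hasFDerivWithinAt_nonpos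
      (hasFDerivAt_sumRate hc (hK hp)).hasFDerivWithinAt
      (sub_mem_posTangentConeAt_of_segment_subset (hconv.segment_subset hp hw))
    simpa [dotProduct] using hderiv
  · exact fun h w hw => sub_nonpos.1 <| (sumRate_sub_le hc (hK hp) (hK hw)).trans (h w hw)

theorem isProj_fullPowerSet_iff :
    IsProj (WithLp.ofLp ⁻¹' fullPowerSet b B) (WithLp.toLp 2 (-c)) (WithLp.toLp 2 p) ↔
      p ∈ fullPowerSet b B ∧ ∀ w ∈ fullPowerSet b B, 0 ≤ (c + p) ⬝ᵥ (w - p) := by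
  refine and_congr_right fun _ => (WithLp.equiv 2 (ι → ℝ)).forall_congr fun w => ?_
  refine imp_congr_right fun _ => ?_
  rw [EuclideanSpace.inner_eq_star_dotProduct, star_trivial, dotProduct_comm, WithLp.ofLp_sub,
    ← neg_add', neg_dotProduct, neg_nonpos]
  rfl

theorem isMaxOn_sumRate_iff_isProj (hc : ∀ k, 0 < c k) :
    p ∈ budgetSet b B ∧ IsMaxOn (sumRate c) (budgetSet b B) p ↔
      IsProj (WithLp.ofLp ⁻¹' fullPowerSet b B) (WithLp.toLp 2 (-c)) (WithLp.toLp 2 p) := by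
  rw [isMaxOn_sumRate_budgetSet_iff hc, isProj_fullPowerSet_iff]
  refine and_congr_right fun hp => ?_
  have hlevel (k : ι) : 0 < (c + p) k := add_pos_of_pos_of_nonneg (hc k) (hp.1.1 k)
  calc IsMaxOn (sumRate c) (fullPowerSet b B) p
      ↔ ∀ w ∈ fullPowerSet b B, (c + p)⁻¹ ⬝ᵥ (w - p) ≤ 0 :=
        isMaxOn_sumRate_iff hc convex_fullPowerSet (fun _ hw => hw.1.1) hp
    _ ↔ ∀ w ∈ fullPowerSet b B, 0 ≤ -(c + p)⁻¹ ⬝ᵥ (w - p) := by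
        simp only [neg_dotProduct, neg_nonneg]
    _ ↔ ExchangeStable b p (-(c + p)⁻¹) := (exchangeStable_iff_dotProduct_nonneg hp).symm
    _ ↔ ExchangeStable b p (c + p) := exchangeStable_neg_inv_iff hlevel
    _ ↔ ∀ w ∈ fullPowerSet b B, 0 ≤ (c + p) ⬝ᵥ (w - p) := exchangeStable_iff_dotProduct_nonneg hp

end PowerAllocation

/-! ### Equilibria as fixed points of projections -/

namespace GameData

variable {Q N : ℕ} (G : GameData Q N)

/-- The spectral mask as a real number. Powers above the total budget `N` are never feasible, so
the limits are truncated at `N`, which makes them finite. -/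
noncomputable def cap (q : Fin Q) (k : Fin N) : ℝ :=
  (min (G.pmax q k) N).toReal

/-- The interference-plus-noise power `Γ_q (1 + Σ_{r≠q} |H_rq(k)|² p_r(k)) / |H_qq(k)|²`, normalized
so that the payoff of user `q` becomes a sum rate with these noise levels. -/
noncomputable def noiseLevel (q : Fin Q) (p : Fin Q → Fin N → ℝ) (k : Fin N) : ℝ :=
  G.gap q * G.interf q p k / ‖G.chan q q k‖ ^ 2

/-- The normalized cross gain `Γ_q |H_rq(k)|² / |H_qq(k)|²` from user `r` to user `q`. -/
noncomputable def crossGain (q r : Fin Q) (k : Fin N) : ℝ :=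
  G.gap q * ‖G.chan r q k‖ ^ 2 / ‖G.chan q q k‖ ^ 2

/-- The largest normalized cross gain from user `r` to user `q` over all carriers. -/
noncomputable def peakCrossGain (q r : Fin Q) : ℝ :=
  ⨆ k, G.crossGain q r k

theorem cap_nonneg (q : Fin Q) : 0 ≤ G.cap q :=
  fun _ => ENNReal.toReal_nonneg

theorem le_cap_iff (q : Fin Q) (k : Fin N) {x : ℝ} (hx : x ≤ N) :
    x ≤ G.cap q k ↔ ENNReal.ofReal x ≤ G.pmax q k := by
  have hfinite : min (G.pmax q k) N ≠ ⊤ := ne_top_of_le_ne_top (by simp) (min_le_right _ _)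
  have hxN : ENNReal.ofReal x ≤ N := by simpa using ENNReal.ofReal_le_ofReal hx
  rw [cap, ← ENNReal.ofReal_le_iff_le_toReal hfinite, le_min_iff, and_iff_left hxN]

theorem stratSet_eq_budgetSet (hN : 1 ≤ N) (q : Fin Q) : G.stratSet q = budgetSet (G.cap q) N := by
  have hN' : (0 : ℝ) < N := by exact_mod_cast hN
  ext p
  have hbudget : (1 / (N : ℝ)) * ∑ k, p k ≤ 1 ↔ ∑ k, p k ≤ N := by
    rw [one_div, inv_mul_le_iff₀ hN', mul_one]
  simp only [stratSet, budgetSet, Set.mem_ofPred_eq, hbudget, Set.mem_Icc, Pi.le_def,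
    forall_and]
  refine and_congr_left fun hsum => and_congr_right fun h0 => ?_
  have hpN (k : Fin N) : p k ≤ N :=
    (Finset.single_le_sum (fun i _ => h0 i) (Finset.mem_univ k)).trans hsum
  exact forall_congr' fun k => (G.le_cap_iff q k (hpN k)).symm

theorem gap_pos (q : Fin Q) : 0 < G.gap q :=
  one_pos.trans_le (G.one_le_gap q)

theorem noiseLevel_pos (q : Fin Q) {p : Fin Q → Fin N → ℝ} (hp : 0 ≤ p) (k : Fin N) :
    0 < G.noiseLevel q p k := by
  have hinterf : 0 < G.interf q p k := add_pos_of_pos_of_nonneg one_pos <|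
    Finset.sum_nonneg fun r _ => mul_nonneg (sq_nonneg _) (hp r k)
  have hgap := G.gap_pos q
  have hchan : 0 < ‖G.chan q q k‖ := norm_pos_iff.2 (G.chan_diag_ne q k)
  unfold noiseLevel
  positivity

theorem noiseLevel_update_self (q : Fin Q) (p : Fin Q → Fin N → ℝ) (w : Fin N → ℝ) :
    G.noiseLevel q (Function.update p q w) = G.noiseLevel q p := by
  have hinterf : G.interf q (Function.update p q w) = G.interf q p := funext fun k =>
    congrArg _ <| Finset.sum_congr rfl fun r hr => by
      rw [Function.update_of_ne (Finset.ne_of_mem_erase hr)]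
  unfold noiseLevel
  rw [hinterf]

theorem payoff_eq_sumRate (q : Fin Q) (p : Fin Q → Fin N → ℝ) :
    G.payoff q p = (1 / (N : ℝ)) * sumRate (G.noiseLevel q p) (p q) := by
  refine congrArg _ (Finset.sum_congr rfl fun k _ => ?_)
  rw [noiseLevel]
  congr 2
  field_simp

theorem isNE_iff_isMaxOn (hN : 1 ≤ N) (p : Fin Q → Fin N → ℝ) :
    G.isNE p ↔ ∀ q, p q ∈ budgetSet (G.cap q) N ∧
      IsMaxOn (sumRate (G.noiseLevel q p)) (budgetSet (G.cap q) N) (p q) := by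
  have hN' : (0 : ℝ) < 1 / N := one_div_pos.2 (by exact_mod_cast hN)
  simp only [isNE, G.stratSet_eq_budgetSet hN, payoff_eq_sumRate,
    noiseLevel_update_self, Function.update_self, mul_le_mul_iff_right₀ hN', isMaxOn_iff,
    forall_and]

theorem isNE_iff_isProj (hN : 1 ≤ N) (p : Fin Q → Fin N → ℝ) :
    G.isNE p ↔ ∀ q, IsProj (WithLp.ofLp ⁻¹' fullPowerSet (G.cap q) N)
      (WithLp.toLp 2 (-G.noiseLevel q p)) (WithLp.toLp 2 (p q)) := by
  rw [G.isNE_iff_isMaxOn hN]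
  constructor
  · exact fun h q => (isMaxOn_sumRate_iff_isProj (G.noiseLevel_pos q fun r => (h r).1.1.1)).1 (h q)
  · exact fun h q => (isMaxOn_sumRate_iff_isProj (G.noiseLevel_pos q fun r => (h r).1.1.1)).2 (h q)

/-! ### Contraction under small cross gains -/

theorem crossGain_nonneg (q r : Fin Q) (k : Fin N) : 0 ≤ G.crossGain q r k := by
  have := G.gap_pos q
  unfold crossGain
  positivity

theorem crossGain_le_peakCrossGain (q r : Fin Q) (k : Fin N) :
    G.crossGain q r k ≤ G.peakCrossGain q r :=
  Finite.le_ciSup _ k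

theorem peakCrossGain_nonneg (q r : Fin Q) : 0 ≤ G.peakCrossGain q r :=
  Real.iSup_nonneg fun k => G.crossGain_nonneg q r k

theorem noiseLevel_sub (q : Fin Q) (x y : Fin Q → Fin N → ℝ) :
    G.noiseLevel q x - G.noiseLevel q y
      = ∑ r ∈ Finset.univ.erase q, G.crossGain q r * (x r - y r) := by
  ext k
  simp only [Pi.sub_apply, Finset.sum_apply, Pi.mul_apply, noiseLevel, interf, crossGain,
    ← sub_div, ← mul_sub, add_sub_add_left_eq_sub, ← Finset.sum_sub_distrib, Finset.mul_sum,
    Finset.sum_div]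
  exact Finset.sum_congr rfl fun r _ => by ring

theorem dist_noiseLevel_le (q : Fin Q) (x y : Fin Q → EuclideanSpace ℝ (Fin N)) :
    dist (WithLp.toLp 2 (-G.noiseLevel q fun r => (x r).ofLp))
        (WithLp.toLp 2 (-G.noiseLevel q fun r => (y r).ofLp))
      ≤ (∑ r ∈ Finset.univ.erase q, G.peakCrossGain q r) * dist x y := by
  rw [dist_comm, dist_eq_norm, ← WithLp.toLp_sub, neg_sub_neg, noiseLevel_sub, WithLp.toLp_sum,
    Finset.sum_mul]
  refine norm_sum_le_of_le _ fun r _ => ?_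
  calc ‖WithLp.toLp 2 (G.crossGain q r * (x r - y r).ofLp)‖
      ≤ G.peakCrossGain q r * ‖x r - y r‖ :=
        norm_toLp_mul_le (G.peakCrossGain_nonneg q r) (fun k =>
          (abs_of_nonneg (G.crossGain_nonneg q r k)).trans_le
            (G.crossGain_le_peakCrossGain q r k)) _
    _ ≤ G.peakCrossGain q r * dist x y := by
        rw [← dist_eq_norm]
        exact mul_le_mul_of_nonneg_left (dist_le_pi_dist x y r) (G.peakCrossGain_nonneg q r)

theorem exists_lipschitzWith_noiseLevel
    (hrow : ∀ q, ∑ r ∈ Finset.univ.erase q, G.peakCrossGain q r < 1) :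
    ∃ L : ℝ≥0, L < 1 ∧ LipschitzWith L fun (x : Fin Q → EuclideanSpace ℝ (Fin N)) q =>
      (WithLp.toLp 2 (-G.noiseLevel q fun r => (x r).ofLp) : EuclideanSpace ℝ (Fin N)) := by
  let rowSum (q : Fin Q) : ℝ≥0 := (∑ r ∈ Finset.univ.erase q, G.peakCrossGain q r).toNNReal
  refine ⟨Finset.univ.sup rowSum, (Finset.sup_lt_iff one_pos).2 fun q _ =>
    Real.toNNReal_lt_one.2 (hrow q), LipschitzWith.of_dist_le_mul fun x y =>
      (dist_pi_le_iff (by positivity)).2 fun q => ?_⟩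
  refine (G.dist_noiseLevel_le q x y).trans (mul_le_mul_of_nonneg_right ?_ dist_nonneg)
  exact (Real.le_coe_toNNReal _).trans (NNReal.coe_le_coe.2
    (Finset.le_sup (f := rowSum) (Finset.mem_univ q)))

theorem existsUnique_isNE (hN : 1 ≤ N)
    (hrow : ∀ q, ∑ r ∈ Finset.univ.erase q, G.peakCrossGain q r < 1) :
    ∃! p : Fin Q → Fin N → ℝ, G.isNE p := by
  obtain ⟨L, hL, hlip⟩ := G.exists_lipschitzWith_noiseLevel hrow
  have hfixed := existsUnique_forall_isProj
    (K := fun q => WithLp.ofLp ⁻¹' fullPowerSet (G.cap q) N)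
    (fun q => (fullPowerSet_nonempty (G.cap_nonneg q) N.cast_nonneg).preimage
      (WithLp.ofLp_surjective 2))
    (fun q => isClosed_fullPowerSet.preimage (PiLp.continuous_ofLp 2 _))
    (fun q => convex_fullPowerSet.linear_preimage
      (WithLp.linearEquiv 2 ℝ (Fin N → ℝ)).toLinearMap) hL hlip
  exact ((Equiv.piCongrRight fun _ => WithLp.equiv 2 (Fin N → ℝ)).existsUnique_congr
    fun x => (G.isNE_iff_isProj hN _).symm).1 hfixed

/-! ### The matrices of normalized cross gains -/

theorem Hmat_nonneg (k : Fin N) (q r : Fin Q) : 0 ≤ G.Hmat k q r := by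
  unfold Hmat
  split_ifs
  exacts [G.crossGain_nonneg q r k, le_rfl]

theorem Hmat_le_peakCrossGain (k : Fin N) (q r : Fin Q) : G.Hmat k q r ≤ G.peakCrossGain q r := by
  unfold Hmat
  split_ifs
  exacts [G.crossGain_le_peakCrossGain q r k, G.peakCrossGain_nonneg q r]

theorem Hmat_apply_self (k : Fin N) (q : Fin Q) : G.Hmat k q q = 0 :=
  if_neg fun h => h.1 rfl

theorem sum_Hmat_le_sum_peakCrossGain (q : Fin Q) (k : Fin N) :
    ∑ r ∈ Finset.univ.erase q, G.Hmat k q r ≤ ∑ r ∈ Finset.univ.erase q, G.peakCrossGain q r :=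
  Finset.sum_le_sum fun r _ => G.Hmat_le_peakCrossGain k q r

theorem sum_abs_Hmat (q : Fin Q) (k : Fin N) :
    ∑ r, |G.Hmat k q r| = ∑ r ∈ Finset.univ.erase q, G.Hmat k q r := by
  simp only [abs_of_nonneg (G.Hmat_nonneg k q _)]
  exact (Finset.sum_erase _ (G.Hmat_apply_self k q)).symm

theorem sum_peakCrossGain_lt_one (hQ : 2 ≤ Q) (hN : 1 ≤ N) {q : Fin Q}
    (h : ∀ r k, r ≠ q → G.crossGain q r k < 1 / ((Q : ℝ) - 1)) :
    ∑ r ∈ Finset.univ.erase q, G.peakCrossGain q r < 1 := by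
  have : Nonempty (Fin N) := ⟨⟨0, hN⟩⟩
  have hcard : (Finset.univ.erase q).card = Q - 1 := by simp
  have hQ' : (Q : ℝ) - 1 ≠ 0 := by
    have : (2 : ℝ) ≤ Q := by exact_mod_cast hQ
    linarith
  calc ∑ r ∈ Finset.univ.erase q, G.peakCrossGain q r
      < ∑ _r ∈ Finset.univ.erase q, 1 / ((Q : ℝ) - 1) :=
        Finset.sum_lt_sum_of_nonempty (Finset.card_pos.1 (by omega)) fun r hr => by
          obtain ⟨k, hk⟩ := exists_eq_ciSup_of_finite (f := G.crossGain q r)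
          exact hk.symm.trans_lt (h r k (Finset.ne_of_mem_erase hr))
    _ = 1 := by
        rw [Finset.sum_const, nsmul_eq_mul, hcard, Nat.cast_pred (by omega), mul_one_div_cancel hQ']

end GameData

theorem specRad_lt_one_of_sum_abs_lt_one {Q : ℕ} {M : Matrix (Fin Q) (Fin Q) ℝ}
    (h : ∀ q, ∑ r, |M q r| < 1) : specRad M < 1 := by
  let A := M.map (Complex.ofReal ·)
  obtain hempty | hne := ((fun z : ℂ => ‖z‖) '' spectrum ℂ A).eq_empty_or_nonempty
  · rw [specRad, hempty, Real.sSup_empty]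
    exact one_pos
  rw [specRad, (A.finite_spectrum.image _).csSup_lt_iff hne]
  rintro _ ⟨z, hz, rfl⟩
  rw [← Matrix.spectrum_toLin', ← Module.End.hasEigenvalue_iff_mem_spectrum] at hz
  -- Gershgorin: the disc around `A q q` lies in the disc around `0` of radius the full row sum.
  obtain ⟨q, hq⟩ := eigenvalue_mem_ball hz
  calc ‖z‖ ≤ ‖A q q‖ + ‖z - A q q‖ := norm_le_norm_add_norm_sub' _ _
    _ ≤ ‖A q q‖ + ∑ r ∈ Finset.univ.erase q, ‖A q r‖ := by
        gcongr
        exact mem_closedBall_iff_norm.1 hq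
    _ = ∑ r, |M q r| := by
        rw [Finset.add_sum_erase _ (fun r => ‖A q r‖) (Finset.mem_univ q)]
        simp [A]
    _ < 1 := h q

theorem one_div_two_mul_sub_three_le {x : ℝ} (hx : 2 ≤ x) : 1 / (2 * x - 3) ≤ 1 / (x - 1) :=
  one_div_le_one_div_of_le (by linarith) (by linarith)

end NCGame

theorem NCGame.C5_C6_imply_unique_NE_general {Q N : ℕ} (hN : 1 ≤ N) (G : NCGame.GameData Q N)
    (hrow : ∀ q, ∑ r ∈ Finset.univ.erase q, G.peakCrossGain q r < 1) :
    (∀ (q : Fin Q) (k : Fin N), ∑ r ∈ Finset.univ.erase q, G.Hmat k q r < 1) ∧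
    (∀ k : Fin N, NCGame.specRad (G.Hmat k) < 1) ∧
    ∃! p : Fin Q → Fin N → ℝ, G.isNE p := by
  have hHmat (q : Fin Q) (k : Fin N) : ∑ r ∈ Finset.univ.erase q, G.Hmat k q r < 1 :=
    (G.sum_Hmat_le_sum_peakCrossGain q k).trans_lt (hrow q)
  refine ⟨hHmat, fun k => NCGame.specRad_lt_one_of_sum_abs_lt_one fun q => ?_,
    G.existsUnique_isNE hN hrow⟩
  exact (G.sum_abs_Hmat q k).trans_lt (hHmat q k)

/-- **Corollary 3 (conditions C5 and C6 are sufficient for C3).** If `Q ≥ 2` and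
`Γ_q |H_rq(k)|²/|H_qq(k)|² < 1/(Q−1)` for every `q`, every `r ≠ q` and every `k`
(condition C5), or under the stronger hypothesis with bound `1/(2Q−3)` (condition C6),
then `Σ_{r≠q}[H(k)]_qr < 1` for every `q, k` (condition C3 with unit weights); consequently
`ρ(H(k)) < 1` for every `k` and game `G` admits exactly one Nash equilibrium. -/
theorem NCGame.C5_C6_imply_unique_NE (Q N : ℕ) (hQ : 2 ≤ Q) (hN : 1 ≤ N)
    (G : NCGame.GameData Q N)
    (hbudget : ∀ q, (1 : ℝ≥0∞) < (1 / (N : ℝ≥0∞)) * ∑ k, G.pmax q k)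
    (hcond :
      (∀ (q r : Fin Q) (k : Fin N), r ≠ q →
          G.gap q * ‖G.chan r q k‖ ^ 2 / ‖G.chan q q k‖ ^ 2 < 1 / ((Q : ℝ) - 1)) ∨
      (∀ (q r : Fin Q) (k : Fin N), r ≠ q →
          G.gap q * ‖G.chan r q k‖ ^ 2 / ‖G.chan q q k‖ ^ 2 < 1 / (2 * (Q : ℝ) - 3))) :
    (∀ (q : Fin Q) (k : Fin N), ∑ r ∈ Finset.univ.erase q, G.Hmat k q r < 1) ∧
    (∀ k : Fin N, NCGame.specRad (G.Hmat k) < 1) ∧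
    ∃! p : Fin Q → Fin N → ℝ, G.isNE p := by
  exact NCGame.C5_C6_imply_unique_NE_general hN G fun q => G.sum_peakCrossGain_lt_one hQ hN
    fun r k hr => hcond.elim (fun hC5 => hC5 q r k hr) fun hC6 => (hC6 q r k hr).trans_le
      (NCGame.one_div_two_mul_sub_three_le (by exact_mod_cast hQ))
end

section
/- Let λ_1,…,λ_Q > 0. Then the function p ↦ Σ_{q=1}^Q λ_q·R_q(p) attains its maximum over P_1×…×P_Q, and every global maximizer p* satisfies: (a) p* is a Nash equilibrium of the modified game G̃(λ), i.e., Φ̃_q(p*_q, p*_{-q}) ≥ Φ̃_q(p_q, p*_{-q}) for every q and every p_q ∈ P_q (in particular the solution set of G̃(λ) is nonempty); and (b) p* is Pareto optimal: there is no p ∈ P_1×…×P_Q with R_q(p) ≥ R_q(p*) for all q and R_q(p) > R_q(p*) for some q. (Proposition 4, first part: scalarization maximizers are Pareto-optimal Nash equilibria of the modified game.) -/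
/-!
Multiplying by `λ_q` turns the modified payoff `Φ̃_q` into the weighted sum `Σ_r λ_r R_r`, so every
player of `G̃(λ)` optimizes the same function and a joint maximizer of it admits no profitable
unilateral deviation. Positivity of the weights makes `x ↦ Σ_q λ_q x_q` strictly monotone, and a
maximizer of a strictly monotone function of the payoff vector has a maximal payoff vector, i.e. is
Pareto optimal. A maximizer exists because the strategy sets are compact and the payoffs are
continuous where all powers are nonnegative, the interference-plus-noise being positive there.
-/

open scoped ENNReal

namespace NCGame.GameData

/-- Payoff `Φ̃_q` of user `q` in the modified game `G̃(λ)`. -/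
noncomputable def modPayoff {Q N : ℕ} (G : NCGame.GameData Q N) (lam : Fin Q → ℝ)
    (q : Fin Q) (p : Fin Q → Fin N → ℝ) : ℝ :=
  G.payoff q p + (1 / lam q) * ∑ r ∈ Finset.univ.erase q, lam r * G.payoff r p

/-- `p` is a Nash equilibrium of the modified game `G̃(λ)`. -/
def isModNE {Q N : ℕ} (G : NCGame.GameData Q N) (lam : Fin Q → ℝ)
    (p : Fin Q → Fin N → ℝ) : Prop :=
  (∀ q, p q ∈ G.stratSet q) ∧
  ∀ q, ∀ pq ∈ G.stratSet q,
    G.modPayoff lam q (Function.update p q pq) ≤ G.modPayoff lam q p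

end NCGame.GameData

namespace NCGame

lemma strictMono_sum_mul {ι R : Type*} [Fintype ι] [NonUnitalNonAssocSemiring R] [PartialOrder R]
    [IsOrderedCancelAddMonoid R] [PosMulStrictMono R] {w : ι → R} (hw : ∀ i, 0 < w i) :
    StrictMono fun x : ι → R => ∑ i, w i * x i := by
  intro x y hxy
  obtain ⟨hle, i, hlt⟩ := Pi.lt_def.1 hxy
  exact Finset.sum_lt_sum (fun j _ => mul_le_mul_of_nonneg_left (hle j) (hw j).le)
    ⟨i, Finset.mem_univ i, mul_lt_mul_of_pos_left hlt (hw i)⟩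

namespace GameData

variable {Q N : ℕ} (G : GameData Q N) (lam : Fin Q → ℝ) (q : Fin Q)

/-- The set `P_1 × … × P_Q` of strategy profiles of the game. -/
def profileSet : Set (Fin Q → Fin N → ℝ) :=
  Set.univ.pi G.stratSet

/-- The scalarized objective `Σ_q λ_q R_q`. -/
noncomputable def weightedSum (p : Fin Q → Fin N → ℝ) : ℝ :=
  ∑ q, lam q * G.payoff q p

/-- The signal-to-interference-plus-noise ratio of user `q` on carrier `k`, reduced by the gap
`Γ_q`: the quantity whose `log (1 + ·)` is averaged in `payoff`. -/
noncomputable def sinr (p : Fin Q → Fin N → ℝ) (k : Fin N) : ℝ :=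
  (1 / G.gap q) * (‖G.chan q q k‖ ^ 2 * p q k) / G.interf q p k

section Compactness

lemma isClosed_stratSet : IsClosed (G.stratSet q) := by
  simp only [stratSet, Set.ofPred_and, Set.ofPred_forall]
  refine (isClosed_iInter fun k => .inter ?nonneg ?mask).inter ?budget
  case nonneg => exact isClosed_le (by fun_prop) (by fun_prop)
  case mask =>
    exact isClosed_le (ENNReal.continuous_ofReal.comp (continuous_apply k)) continuous_const
  case budget => exact isClosed_le (by fun_prop) (by fun_prop)

lemma stratSet_subset_Icc : G.stratSet q ⊆ Set.Icc 0 fun _ => (N : ℝ) := by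
  rintro p ⟨hmask, hbudget⟩
  refine ⟨fun k => (hmask k).1, fun k => ?_⟩
  have hN : (0 : ℝ) < N := Nat.cast_pos.2 k.pos
  calc
    p k ≤ ∑ j, p j := Finset.single_le_sum (fun j _ => (hmask j).1) (Finset.mem_univ k)
    _ ≤ N := by rwa [one_div, inv_mul_le_one₀ hN] at hbudget

lemma isCompact_profileSet : IsCompact G.profileSet :=
  isCompact_univ_pi fun q =>
    isCompact_Icc.of_isClosed_subset (G.isClosed_stratSet q) (G.stratSet_subset_Icc q)

lemma zero_mem_profileSet : 0 ∈ G.profileSet := by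
  simp [profileSet, stratSet]

lemma profileSet_subset_Ici : G.profileSet ⊆ Set.Ici 0 :=
  fun _ hp q => (G.stratSet_subset_Icc q (hp q trivial)).1

end Compactness

section Continuity

variable {p : Fin Q → Fin N → ℝ}

lemma interf_pos (hp : 0 ≤ p) (k : Fin N) : 0 < G.interf q p k :=
  add_pos_of_pos_of_nonneg one_pos <|
    Finset.sum_nonneg fun r _ => mul_nonneg (sq_nonneg _) (hp r k)

lemma sinr_nonneg (hp : 0 ≤ p) (k : Fin N) : 0 ≤ G.sinr q p k := by
  have hgap : 0 < G.gap q := one_pos.trans_le (G.one_le_gap q)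
  have hpower : 0 ≤ p q k := hp q k
  have hinterf := G.interf_pos q hp k
  unfold sinr
  positivity

lemma continuousOn_sinr (k : Fin N) : ContinuousOn (G.sinr q · k) (Set.Ici 0) := by
  have hinterf : Continuous (G.interf q · k) := by
    unfold interf
    fun_prop
  exact ContinuousOn.div (by fun_prop) hinterf.continuousOn
    fun _ hp => (G.interf_pos q hp k).ne'

lemma continuousOn_payoff : ContinuousOn (G.payoff q) (Set.Ici 0) :=
  continuousOn_const.mul <| continuousOn_finsetSum _ fun k _ =>
    (continuousOn_const.add (G.continuousOn_sinr q k)).log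
      fun _ hp => (add_pos_of_pos_of_nonneg one_pos (G.sinr_nonneg q hp k)).ne'

lemma continuousOn_weightedSum : ContinuousOn (G.weightedSum lam) (Set.Ici 0) :=
  continuousOn_finsetSum _ fun q _ => continuousOn_const.mul (G.continuousOn_payoff q)

end Continuity

lemma exists_isMaxOn_weightedSum :
    ∃ p ∈ G.profileSet, IsMaxOn (G.weightedSum lam) G.profileSet p :=
  G.isCompact_profileSet.exists_isMaxOn ⟨0, G.zero_mem_profileSet⟩
    ((G.continuousOn_weightedSum lam).mono G.profileSet_subset_Ici)

section Maximizer

variable {G lam q}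

lemma mul_modPayoff (hq : lam q ≠ 0) (p : Fin Q → Fin N → ℝ) :
    lam q * G.modPayoff lam q p = G.weightedSum lam p := by
  rw [modPayoff, mul_add, ← mul_assoc, mul_one_div_cancel hq, one_mul,
    Finset.add_sum_erase _ (fun r => lam r * G.payoff r p) (Finset.mem_univ q), weightedSum]

lemma modPayoff_le_modPayoff_iff (hq : 0 < lam q) {p p' : Fin Q → Fin N → ℝ} :
    G.modPayoff lam q p ≤ G.modPayoff lam q p' ↔ G.weightedSum lam p ≤ G.weightedSum lam p' := by
  rw [← mul_le_mul_iff_of_pos_left hq, mul_modPayoff hq.ne', mul_modPayoff hq.ne']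

variable {p : Fin Q → Fin N → ℝ}

lemma isModNE_of_isMaxOn_weightedSum (hlam : ∀ q, 0 < lam q) (hp : p ∈ G.profileSet)
    (hmax : IsMaxOn (G.weightedSum lam) G.profileSet p) : G.isModNE lam p :=
  ⟨fun q => hp q trivial, fun q _ hpq => (modPayoff_le_modPayoff_iff (hlam q)).2 <|
    hmax ((Set.update_mem_pi_iff_of_mem hp).2 fun _ => hpq)⟩

lemma maximalFor_payoff_of_isMaxOn_weightedSum (hlam : ∀ q, 0 < lam q) (hp : p ∈ G.profileSet)
    (hmax : IsMaxOn (G.weightedSum lam) G.profileSet p) :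
    MaximalFor (· ∈ G.profileSet) (fun p q => G.payoff q p) p :=
  .of_strictMonoOn_comp ((strictMono_sum_mul hlam).strictMonoOn _) ⟨hp, fun _ hp' _ => hmax hp'⟩

end Maximizer

end GameData

end NCGame

/-- **Proposition 4 (first part).** For positive weights `λ`, the weighted sum
`Σ_q λ_q R_q` attains its maximum over the product of strategy sets, and every global
maximizer `p*` is (a) a Nash equilibrium of the modified game `G̃(λ)` (in particular the
solution set of `G̃(λ)` is nonempty), and (b) Pareto optimal. -/
theorem NCGame.scalarization_maximizers (Q N : ℕ) (hQ : 1 ≤ Q) (hN : 1 ≤ N)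
    (G : NCGame.GameData Q N) (lam : Fin Q → ℝ) (hlam : ∀ q, 0 < lam q) :
    (∃ p : Fin Q → Fin N → ℝ, (∀ q, p q ∈ G.stratSet q) ∧
      ∀ p' : Fin Q → Fin N → ℝ, (∀ q, p' q ∈ G.stratSet q) →
        ∑ q, lam q * G.payoff q p' ≤ ∑ q, lam q * G.payoff q p) ∧
    ∀ p : Fin Q → Fin N → ℝ, (∀ q, p q ∈ G.stratSet q) →
      (∀ p' : Fin Q → Fin N → ℝ, (∀ q, p' q ∈ G.stratSet q) →
        ∑ q, lam q * G.payoff q p' ≤ ∑ q, lam q * G.payoff q p) →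
      (G.isModNE lam p ∧
        ¬ ∃ p' : Fin Q → Fin N → ℝ, (∀ q, p' q ∈ G.stratSet q) ∧
            (∀ q, G.payoff q p ≤ G.payoff q p') ∧ ∃ q, G.payoff q p < G.payoff q p') := by
  simp only [← Set.mem_univ_pi]
  refine ⟨G.exists_isMaxOn_weightedSum lam, fun p hp hmax =>
    ⟨GameData.isModNE_of_isMaxOn_weightedSum hlam hp hmax, ?_⟩⟩
  rintro ⟨p', hp', himproves⟩
  have hpareto := GameData.maximalFor_payoff_of_isMaxOn_weightedSum hlam hp hmax
  exact hpareto.not_gt hp' (Pi.lt_def.2 himproves)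
end
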